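/- arXiv:1609.04195 — 2 statements merged into one kernel-verified Lean document; each statement's English description precedes it below -/
import Mathlib

section
/- Let q be a real stable polynomial in the variables z₁,…,z_n whose degree in the variable z_i is at most 3, let z ∈ ℝ^n be above the roots of q, and suppose Φ_q^i(z) > 0. Set δ := 4/(3Φ_q^i(z)). Then for every j ∈ {1,…,n}: (q·∂_j∂_i²q − (∂_j q)·(∂_i²q))(z) ≤ δ·(q·∂_j∂_i³q − (∂_j q)·(∂_i³q))(z); equivalently, ∂_j(∂_i²q/q)(z) ≤ δ·∂_j(∂_i³q/q)(z) as derivatives of rational functions evaluated at z. -/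
open Polynomial

/-- A polynomial with real coefficients is real stable if it has no zero all of whose
coordinates have strictly positive imaginary part. -/
def RealStable {n : ℕ} (p : MvPolynomial (Fin n) ℝ) : Prop :=
  ∀ z : Fin n → ℂ, (∀ k, 0 < (z k).im) → MvPolynomial.aeval z p ≠ 0

/-- `z ∈ ℝ^n` is above the roots of `p` if `p` does not vanish on the nonnegative orthant
based at `z`. -/
def AboveRoots {n : ℕ} (p : MvPolynomial (Fin n) ℝ) (z : Fin n → ℝ) : Prop :=
  ∀ t : Fin n → ℝ, (∀ k, 0 ≤ t k) → MvPolynomial.eval (z + t) p ≠ 0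

/-- The barrier function `Φ_p^i(z) = (∂ᵢp)(z)/p(z)`. -/
noncomputable def Phi {n : ℕ} (p : MvPolynomial (Fin n) ℝ) (i : Fin n) (z : Fin n → ℝ) : ℝ :=
  MvPolynomial.eval z (MvPolynomial.pderiv i p) / MvPolynomial.eval z p


lemma limit_nonneg (c0 c1 c2 c3 c4 : ℝ) 
    (h : ∀ r : ℝ, 0 < r → 0 ≤ c0 + c1 * r + c2 * r^2 + c3 * r^3 + c4 * r^4) : 0 ≤ c0 := by
  have hc : Continuous (fun r : ℝ => c0 + c1 * r + c2 * r^2 + c3 * r^3 + c4 * r^4) := by fun_prop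
  have ht : Filter.Tendsto (fun r : ℝ => c0 + c1 * r + c2 * r^2 + c3 * r^3 + c4 * r^4)
      (nhdsWithin 0 (Set.Ioi 0)) (nhds c0) := by
    have := (hc.tendsto 0).mono_left (nhdsWithin_le_nhds (s := Set.Ioi 0))
    simpa using this
  refine ge_of_tendsto ht ?_
  filter_upwards [self_mem_nhdsWithin] with r hr using h r hr

/-- Residue sign at a root. -/
lemma residue_sign (a b c h1 h2 h3 : ℝ)
    (hN : ∀ x y : ℝ, 0 < y → 0 ≤ (((h1:ℂ) * (⟨x, y⟩:ℂ)^2 - h2 * (⟨x, y⟩:ℂ) + h3) *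
      (starRingEnd ℂ) (((⟨x, y⟩:ℂ) - a) * ((⟨x, y⟩:ℂ) - b) * ((⟨x, y⟩:ℂ) - c))).im) :
    (h1 * a^2 - h2 * a + h3) * ((a - b) * (a - c)) ≤ 0 := by
  have := limit_nonneg (-((h1 * a^2 - h2 * a + h3) * ((a - b) * (a - c)))) 0
    (h1 * (a-b)*(a-c) + (h1*a^2-h2*a+h3) - (2*h1*a-h2)*((a-b)+(a-c))) 0 (-h1) ?_
  · linarith
  intro r hr
  have h := hN a r hr
  simp [pow_two] at h
  refine nonneg_of_mul_nonneg_right (a := r) ?_ hr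
  refine h.trans_eq ?_
  ring

lemma double_root (a c h1 h2 h3 : ℝ)
    (hN : ∀ x y : ℝ, 0 < y → 0 ≤ (((h1:ℂ) * (⟨x, y⟩:ℂ)^2 - h2 * (⟨x, y⟩:ℂ) + h3) *
      (starRingEnd ℂ) (((⟨x, y⟩:ℂ) - a) * ((⟨x, y⟩:ℂ) - a) * ((⟨x, y⟩:ℂ) - c))).im) :
    (h1 * a^2 - h2 * a + h3) * (a - c) = 0 := by
  apply le_antisymm
  · have := limit_nonneg (-((h1 * a^2 - h2 * a + h3) * (a - c)))
      (-((h1 * a^2 - h2 * a + h3) + (2*h1*a-h2)*(a-c))) (-2*(2*h1*a-h2)) (-2*h1) 0 ?_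
    · linarith
    intro r hr
    have h := hN (a+r) r hr
    simp [pow_two] at h
    refine nonneg_of_mul_nonneg_right (a := 2*r^2) ?_ (by positivity)
    refine h.trans_eq ?_
    ring
  · have := limit_nonneg (((h1 * a^2 - h2 * a + h3) * (a - c)))
      (-((h1 * a^2 - h2 * a + h3) + (2*h1*a-h2)*(a-c))) (2*(2*h1*a-h2)) (-2*h1) 0 ?_
    · linarith
    intro r hr
    have h := hN (a-r) r hr
    simp [pow_two] at h
    refine nonneg_of_mul_nonneg_right (a := 2*r^2) ?_ (by positivity)
    refine h.trans_eq ?_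
    ring

lemma triple_root (a h1 h2 h3 : ℝ)
    (hN : ∀ x y : ℝ, 0 < y → 0 ≤ (((h1:ℂ) * (⟨x, y⟩:ℂ)^2 - h2 * (⟨x, y⟩:ℂ) + h3) *
      (starRingEnd ℂ) (((⟨x, y⟩:ℂ) - a) * ((⟨x, y⟩:ℂ) - a) * ((⟨x, y⟩:ℂ) - a))).im) :
    h1 ≤ 0 ∧ h2 = 2 * a * h1 ∧ h3 = a^2 * h1 := by
  have h0 : h1 * a^2 - h2 * a + h3 = 0 := by
    apply le_antisymm
    · have := limit_nonneg (-(h1 * a^2 - h2 * a + h3)) (-2*(2*h1*a-h2)) (-2*h1) 0 0 ?_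
      · linarith
      intro r hr
      have h := hN (a+r) r hr
      simp [pow_two] at h
      refine nonneg_of_mul_nonneg_right (a := 2*r^3) ?_ (by positivity)
      refine h.trans_eq ?_
      ring
    · have := limit_nonneg ((h1 * a^2 - h2 * a + h3)) 0 (-h1) 0 0 ?_
      · linarith
      intro r hr
      have h := hN a r hr
      simp [pow_two] at h
      refine nonneg_of_mul_nonneg_right (a := r^3) ?_ (by positivity)
      refine h.trans_eq ?_
      ring
  obtain rfl : h3 = h2 * a - h1 * a^2 := by linarith
  have h1' : 2*h1*a-h2 = 0 := by
    apply le_antisymm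
    · have := limit_nonneg (-(2*h1*a-h2)) (-h1) 0 0 0 ?_
      · linarith
      intro r hr
      have h := hN (a+r) r hr
      simp [pow_two] at h
      refine nonneg_of_mul_nonneg_right (a := 4*r^4) ?_ (by positivity)
      refine h.trans_eq ?_
      ring
    · have := limit_nonneg ((2*h1*a-h2)) (-h1) 0 0 0 ?_
      · linarith
      intro r hr
      have h := hN (a-r) r hr
      simp [pow_two] at h
      refine nonneg_of_mul_nonneg_right (a := 4*r^4) ?_ (by positivity)
      linarith
  obtain rfl : h2 = 2*h1*a := by linarith
  refine ⟨?_, by ring, by ring⟩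
  have h := hN a 1 one_pos
  simp [pow_two] at h
  nlinarith

lemma exists_weights (a b c h1 h2 h3 : ℝ)
    (hN : ∀ x y : ℝ, 0 < y → 0 ≤ (((h1:ℂ) * (⟨x, y⟩:ℂ)^2 - h2 * (⟨x, y⟩:ℂ) + h3) *
      (starRingEnd ℂ) (((⟨x, y⟩:ℂ) - a) * ((⟨x, y⟩:ℂ) - b) * ((⟨x, y⟩:ℂ) - c))).im) :
    ∃ A B C : ℝ, A ≤ 0 ∧ B ≤ 0 ∧ C ≤ 0 ∧ h2 = A * (b+c) + B * (a+c) + C*(a+b) ∧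
      h3 = A * (b*c) + B*(a*c) + C*(a*b) := by
  have key : ∀ a c : ℝ, a ≠ c →
      (∀ x y : ℝ, 0 < y → 0 ≤ (((h1:ℂ) * (⟨x, y⟩:ℂ)^2 - h2 * (⟨x, y⟩:ℂ) + h3) *
      (starRingEnd ℂ) (((⟨x, y⟩:ℂ) - a) * ((⟨x, y⟩:ℂ) - a) * ((⟨x, y⟩:ℂ) - c))).im) →
      ∃ A C : ℝ, A ≤ 0 ∧ C ≤ 0 ∧ h2 = A * (a+c) + C * (a+a) ∧ h3 = A * (a*c) + C*(a*a) := by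
    intro a c hac hN
    have hac' : a - c ≠ 0 := sub_ne_zero.2 hac
    have h0 := double_root a c h1 h2 h3 hN
    have h0' : h1 * a^2 - h2 * a + h3 = 0 := by
      rcases mul_eq_zero.1 h0 with h | h
      · exact h
      · exact absurd h hac'
    have e3 : h3 = h2 * a - h1 * a^2 := by linarith
    have hC := residue_sign c a a h1 h2 h3 (fun x y hy => by
      have := hN x y hy
      convert this using 4
      ring)
    -- M(a) (a-c) ≤ 0
    have hA : (2*h1*a - h2) * (a-c) ≤ 0 := by
      have := limit_nonneg (-((2*h1*a - h2) * (a-c))) 0 (-h1) 0 0 ?_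
      · linarith
      intro r hr
      have h := hN a r hr
      simp [pow_two] at h
      refine nonneg_of_mul_nonneg_right (a := r^3) ?_ (by positivity)
      rw [e3] at h
      linarith
    refine ⟨(2*h1*a-h2)/(a-c), (h1*c^2-h2*c+h3)/(a-c)^2, ?_, ?_, ?_, ?_⟩
    · rw [← mul_div_mul_right _ _ hac']
      exact div_nonpos_of_nonpos_of_nonneg hA (mul_self_nonneg _)
    · rw [← mul_div_mul_right _ _ (pow_ne_zero 2 hac')]
      refine div_nonpos_of_nonpos_of_nonneg ?_ (mul_self_nonneg _)
      linarith
    · rw [e3]; field_simp; ring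
    · rw [e3]; field_simp; ring
  by_cases hab : a = b
  · subst hab
    by_cases hac : a = c
    · subst hac
      obtain ⟨x, y, w⟩ := triple_root a h1 h2 h3 hN
      exact ⟨h1, 0, 0, x, le_rfl, le_rfl, by linarith, by linarith⟩
    · obtain ⟨A, C, hA, hC, e1, e2⟩ := key a c hac hN
      exact ⟨A, 0, C, hA, le_rfl, hC, by linarith, by linarith⟩
  by_cases hac : a = c
  · subst hac
    obtain ⟨A, C, hA, hC, e1, e2⟩ := key a b hab (fun x y hy => by
      have := hN x y hy
      convert this using 4
      ring)
    exact ⟨A, C, 0, hA, hC, le_rfl, by linarith, by linarith⟩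
  by_cases hbc : b = c
  · subst hbc
    obtain ⟨A, C, hA, hC, e1, e2⟩ := key b a (Ne.symm hab) (fun x y hy => by
      have := hN x y hy
      convert this using 4
      ring)
    exact ⟨C, A, 0, hC, hA, le_rfl, by linarith, by linarith⟩
  have ha := residue_sign a b c h1 h2 h3 hN
  have hb := residue_sign b a c h1 h2 h3 (fun x y hy => by
      have := hN x y hy
      convert this using 4
      ring)
  have hc := residue_sign c a b h1 h2 h3 (fun x y hy => by
      have := hN x y hy
      convert this using 4
      ring)
  have n1 : a - b ≠ 0 := sub_ne_zero.2 hab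
  have n2 : a - c ≠ 0 := sub_ne_zero.2 hac
  have n3 : b - c ≠ 0 := sub_ne_zero.2 hbc
  have n4 : b - a ≠ 0 := sub_ne_zero.2 (Ne.symm hab)
  have n5 : c - a ≠ 0 := sub_ne_zero.2 (Ne.symm hac)
  have n6 : c - b ≠ 0 := sub_ne_zero.2 (Ne.symm hbc)
  refine ⟨(h1*a^2-h2*a+h3)/((a-b)*(a-c)), (h1*b^2-h2*b+h3)/((b-a)*(b-c)),
    (h1*c^2-h2*c+h3)/((c-a)*(c-b)), ?_, ?_, ?_, ?_, ?_⟩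
  · rw [← mul_div_mul_right _ _ (mul_ne_zero n1 n2)]
    exact div_nonpos_of_nonpos_of_nonneg ha (mul_self_nonneg _)
  · rw [← mul_div_mul_right _ _ (mul_ne_zero n4 n3)]
    exact div_nonpos_of_nonpos_of_nonneg hb (mul_self_nonneg _)
  · rw [← mul_div_mul_right _ _ (mul_ne_zero n5 n6)]
    exact div_nonpos_of_nonpos_of_nonneg hc (mul_self_nonneg _)
  · rw [show b - a = -(a-b) by ring, show c - a = -(a-c) by ring, show c - b = -(b-c) by ring]
    field_simp; ring
  · rw [show b - a = -(a-b) by ring, show c - a = -(a-c) by ring, show c - b = -(b-c) by ring]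
    field_simp; ring

lemma cubic_split (e1 e2 e3 : ℝ)
    (hP : ∀ u : ℂ, 0 < u.im → u^3 - e1 * u^2 + e2 * u - e3 ≠ 0) :
    ∃ a b c : ℝ, e1 = a + b + c ∧ e2 = a*b+a*c+b*c ∧ e3 = a*b*c := by
  have hreal : ∀ u : ℂ, u^3 - e1 * u^2 + e2 * u - e3 = 0 → u = (u.re : ℂ) := by
    intro u hu
    have h1 : ¬ 0 < u.im := fun h => hP u h hu
    have h2 : ¬ u.im < 0 := fun h => by
      refine hP ((starRingEnd ℂ) u) (by simpa using h) ?_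
      have := congrArg (starRingEnd ℂ) hu
      simpa using this
    have : u.im = 0 := le_antisymm (not_lt.1 h1) (not_lt.1 h2)
    exact Complex.ext (by simp) (by simp [this])
  -- first root
  obtain ⟨u, hu⟩ := IsAlgClosed.exists_root (C 1 * X^3 + C (-(e1:ℂ)) * X^2 + C (e2:ℂ) * X + C (-(e3:ℂ)))
    (by rw [degree_cubic one_ne_zero]; decide)
  have hu' : u^3 - e1 * u^2 + e2 * u - e3 = 0 := by
    simp [IsRoot.def] at hu; linear_combination hu
  have hur := hreal u hu'
  set a := u.re with ha
  rw [hur] at hu'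
  have hu'' : a^3 - e1 * a^2 + e2 * a - e3 = 0 := by exact_mod_cast hu'
  obtain ⟨v, hv⟩ := IsAlgClosed.exists_root (C 1 * X^2 + C ((a:ℂ)-e1) * X + C (a^2 - e1*a+(e2:ℂ)))
    (by rw [degree_quadratic one_ne_zero]; decide)
  have hv0 : v^2 + ((a:ℂ)-e1)*v + (a^2-e1*a+e2) = 0 := by
    simp [IsRoot.def] at hv; linear_combination hv
  have hv' : v^3 - e1 * v^2 + e2 * v - e3 = 0 := by
    linear_combination (v - a) * hv0 + hu'
  have hvr := hreal v hv'
  set b := v.re with hb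
  rw [hvr] at hv0
  have hv'' : b^2 + (a-e1)*b + (a^2-e1*a+e2) = 0 := by exact_mod_cast hv0
  refine ⟨a, b, e1 - a - b, by ring, by linear_combination hv'', by linear_combination a * hv'' - hu''⟩

lemma core (e1 e2 e3 h1 h2 h3 : ℝ) (he : 0 < e1)
    (hP : ∀ u : ℂ, 0 < u.im → u^3 - e1 * u^2 + e2 * u - e3 ≠ 0)
    (hpos : ∀ a : ℝ, a < 0 → a^3 - e1 * a^2 + e2 * a - e3 ≠ 0)
    (hN : ∀ u : ℂ, 0 < u.im → 0 ≤ (((h1:ℂ) * u^2 - h2 * u + h3) *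
      (starRingEnd ℂ) (u^3 - e1 * u^2 + e2 * u - e3)).im) :
    e1 * h2 ≤ 4 * h3 := by
  obtain ⟨a, b, c, rfl, rfl, rfl⟩ := cubic_split e1 e2 e3 hP
  have ha : 0 ≤ a := by
    by_contra h
    exact hpos a (not_le.1 h) (by ring)
  have hb : 0 ≤ b := by
    by_contra h
    exact hpos b (not_le.1 h) (by ring)
  have hc : 0 ≤ c := by
    by_contra h
    exact hpos c (not_le.1 h) (by ring)
  obtain ⟨A, B, C, hA, hB, hC, rfl, rfl⟩ := exists_weights a b c h1 h2 h3 (fun x y hy => by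
      have := hN ⟨x, y⟩ hy
      convert this using 4
      push_cast
      ring)
  have k : ∀ D x y w : ℝ, D ≤ 0 → 0 ≤ x → 0 ≤ y → 0 ≤ w →
      D * ((x+y+w)*(y+w) - 4*(y*w)) ≤ 0 := by
    intro D x y w hD hx hy hw
    refine mul_nonpos_of_nonpos_of_nonneg hD ?_
    nlinarith [sq_nonneg (y-w), mul_nonneg hx hy, mul_nonneg hx hw]
  have := k A a b c hA ha hb hc
  have := k B b a c hB hb ha hc
  have := k C c a b hC hc ha hb
  linarith

/-- Restriction of a real polynomial to the complex line `w + t v`. -/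
noncomputable def lineP {n : ℕ} (q : MvPolynomial (Fin n) ℝ) (w v : Fin n → ℂ) : ℂ[X] :=
  MvPolynomial.aeval (fun k => C (w k) + C (v k) * X) q

lemma eval_lineP {n : ℕ} (q : MvPolynomial (Fin n) ℝ) (w v : Fin n → ℂ) (t : ℂ) :
    (lineP q w v).eval t = MvPolynomial.aeval (fun k => w k + t * v k) q := by
  unfold lineP
  induction q using MvPolynomial.induction_on with
  | C a => simp [Polynomial.algebraMap_apply]
  | add p q hp hq => simp [hp, hq]
  | mul_X p i hp => simp [hp]; left; ring

lemma natDegree_lineP {n : ℕ} (q : MvPolynomial (Fin n) ℝ) (w v : Fin n → ℂ) :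
    (lineP q w v).natDegree ≤ q.totalDegree := by
  have h : lineP q w v = MvPolynomial.aeval (fun k => C (w k) + C (v k) * X)
      (MvPolynomial.map (algebraMap ℝ ℂ) q) := by
    rw [MvPolynomial.aeval_map_algebraMap]; rfl
  rw [h]
  have := MvPolynomial.aeval_natDegree_le (m := q.totalDegree) (n := 1)
    (MvPolynomial.map (algebraMap ℝ ℂ) q) (Finset.sup_mono (MvPolynomial.support_map_subset _ _))
    (fun k => C (w k) + C (v k) * X) (fun k => by rw [add_comm]; exact natDegree_linear_le)
  simpa using this

lemma derivative_lineP {n : ℕ} (q : MvPolynomial (Fin n) ℝ) (w : Fin n → ℂ) (i : Fin n) :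
    derivative (lineP q w (Pi.single i 1)) = lineP (MvPolynomial.pderiv i q) w (Pi.single i 1) := by
  unfold lineP
  induction q using MvPolynomial.induction_on with
  | C a => simp [Polynomial.algebraMap_apply]
  | add p q hp hq => simp [hp, hq]
  | mul_X p k hp =>
    by_cases hk : k = i
    · subst hk; simp [hp]; ring
    · simp [hp, MvPolynomial.pderiv_X_of_ne hk, hk]; ring

lemma pderiv_swap {n : ℕ} (q : MvPolynomial (Fin n) ℝ) (i j : Fin n) :
    MvPolynomial.pderiv i (MvPolynomial.pderiv j q) =
      MvPolynomial.pderiv j (MvPolynomial.pderiv i q) := by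
  ext m
  simp only [MvPolynomial.coeff_pderiv]
  by_cases h : i = j
  · subst h; rfl
  · rw [add_right_comm]
    simp [h, Ne.symm h]
    ring

lemma pderiv_four {n : ℕ} (q : MvPolynomial (Fin n) ℝ) (i : Fin n)
    (hdeg : MvPolynomial.degreeOf i q ≤ 3) :
    MvPolynomial.pderiv i (MvPolynomial.pderiv i (MvPolynomial.pderiv i
      (MvPolynomial.pderiv i q))) = 0 := by
  ext m
  simp only [MvPolynomial.coeff_pderiv]
  have : MvPolynomial.coeff (m + Finsupp.single i 1 + Finsupp.single i 1 + Finsupp.single i 1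
      + Finsupp.single i 1) q = 0 := by
    by_contra h
    have := MvPolynomial.degreeOf_le_iff.1 hdeg _ (MvPolynomial.mem_support_iff.2 h)
    simp at this
    omega
  rw [this]; simp

lemma taylor_three (p : ℂ[X]) (h : derivative (derivative (derivative (derivative p))) = 0) (s : ℂ) :
    p.eval s = p.eval 0 + (derivative p).eval 0 * s + (derivative (derivative p)).eval 0 / 2 * s^2
      + (derivative (derivative (derivative p))).eval 0 / 6 * s^3 := by
  have hd : p.natDegree < 4 := by
    by_contra hh
    have h4 : p ≠ 0 := by rintro rfl; simp at hh
    have := congrArg (fun r => coeff r (p.natDegree - 4)) h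
    simp only [coeff_derivative, coeff_zero] at this
    have e : p.natDegree - 4 + 1 + 1 + 1 + 1 = p.natDegree := by omega
    rw [e] at this
    simp only [mul_eq_zero, coeff_natDegree, leadingCoeff_eq_zero, h4, false_or] at this
    norm_cast at this
  rw [eval_eq_sum_range' hd]
  simp only [← coeff_zero_eq_eval_zero, coeff_derivative]
  simp [Finset.sum_range_succ]
  ring

lemma eval_bound (p : ℂ[X]) (d : ℕ) (hd : p.natDegree ≤ d) (s h : ℂ) (r : ℝ) (hr : ‖h‖ ≤ r)
    (hz : ∀ t : ℂ, ‖t - s‖ < r → p.eval t ≠ 0) :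
    ‖p.eval (s + h)‖ ≤ 2^d * ‖p.eval s‖ := by
  have hp := IsAlgClosed.splits p
  have hroot : ∀ z ∈ p.roots, r ≤ ‖s - z‖ := by
    intro z hzr
    by_contra hlt
    refine hz z ?_ (isRoot_of_mem_roots hzr)
    rw [norm_sub_rev]; exact not_le.1 hlt
  have key : ∀ m : Multiset ℂ, (∀ z ∈ m, r ≤ ‖s - z‖) →
      ‖(m.map (fun z => s + h - z)).prod‖ ≤ 2^(m.card) * ‖(m.map (fun z => s - z)).prod‖ := by
    intro m
    induction m using Multiset.induction_on with
    | empty => simp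
    | cons a m ih =>
      intro hm
      have h1 := ih (fun z hz => hm z (Multiset.mem_cons_of_mem hz))
      have h2 := hm a (Multiset.mem_cons_self a m)
      have h3 : ‖s + h - a‖ ≤ 2 * ‖s - a‖ := by
        calc ‖s + h - a‖ = ‖(s - a) + h‖ := by ring_nf
          _ ≤ ‖s - a‖ + ‖h‖ := norm_add_le _ _
          _ ≤ 2 * ‖s - a‖ := by linarith
      simp only [Multiset.map_cons, Multiset.prod_cons, norm_mul, Multiset.card_cons]
      calc _ ≤ (2 * ‖s - a‖) * (2^(m.card) * ‖(m.map (fun z => s - z)).prod‖) := by gcongr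
        _ = _ := by ring
  rw [hp.eval_eq_prod_roots, hp.eval_eq_prod_roots, norm_mul, norm_mul]
  have h1 := key p.roots hroot
  have h2 : (2:ℝ)^(p.roots.card) ≤ 2^d :=
    pow_le_pow_right₀ one_le_two ((card_roots' p).trans hd)
  calc _ ≤ ‖p.leadingCoeff‖ * (2^(p.roots.card) * ‖(p.roots.map (fun z => s - z)).prod‖) := by
        gcongr
    _ ≤ ‖p.leadingCoeff‖ * (2^d * ‖(p.roots.map (fun z => s - z)).prod‖) := by gcongr
    _ = _ := by ring

lemma aeval_real {n : ℕ} (q : MvPolynomial (Fin n) ℝ) (z : Fin n → ℝ) :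
    MvPolynomial.aeval (fun k => (z k : ℂ)) q = ((MvPolynomial.eval z q : ℝ) : ℂ) := by
  induction q using MvPolynomial.induction_on with
  | C a => simp
  | add p q hp hq => simp [hp, hq]
  | mul_X p i hp => simp [hp]

lemma continuous_aeval {n : ℕ} (q : MvPolynomial (Fin n) ℝ) :
    Continuous (fun w : Fin n → ℂ => MvPolynomial.aeval w q) := by
  induction q using MvPolynomial.induction_on with
  | C a => simpa using continuous_const
  | add p q hp hq => simp only [map_add]; exact hp.add hq
  | mul_X p i hp => simp only [map_mul, MvPolynomial.aeval_X]; exact hp.mul (continuous_apply i)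

/-- Boundary nonvanishing (Hurwitz type). -/
lemma stable_boundary {n : ℕ} (q : MvPolynomial (Fin n) ℝ) (hq : RealStable q)
    (z : Fin n → ℝ) (hz : MvPolynomial.eval z q ≠ 0) (p : Fin n → ℂ)
    (hp : ∀ k, p k = 0 ∨ 0 < (p k).im) :
    MvPolynomial.aeval (fun k => (z k : ℂ) + p k) q ≠ 0 := by
  intro h0
  -- a radius
  obtain ⟨r, hr, hrad⟩ : ∃ r : ℝ, 0 < r ∧ ∀ t : ℂ, ‖t‖ < r → ∀ k, 0 ≤ ((1 - t) * p k).im := by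
    have : ∀ᶠ t : ℂ in nhds 0, ∀ k, 0 ≤ ((1 - t) * p k).im := by
      rw [Filter.eventually_all]
      intro k
      rcases hp k with h | h
      · simp [h]
      · have hc : Continuous (fun t : ℂ => ((1 - t) * p k).im) := by fun_prop
        have := (hc.tendsto 0).eventually (lt_mem_nhds (a := 0) (by simpa using h))
        exact this.mono fun t ht => ht.le
    obtain ⟨r, hr, hb⟩ := Metric.eventually_nhds_iff.1 this
    exact ⟨r, hr, fun t ht => hb (by simpa using ht)⟩
  -- the polynomials
  have hbound : ∀ h : ℂ, ‖h‖ ≤ r → ∀ ε : ℝ, 0 < ε →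
      ‖MvPolynomial.aeval (fun k => (z k : ℂ) + ε * Complex.I + (1 - h) * p k) q‖ ≤
      2^q.totalDegree * ‖MvPolynomial.aeval (fun k => (z k : ℂ) + ε * Complex.I + p k) q‖ := by
    intro h hh ε hε
    have := eval_bound (lineP q (fun k => (z k : ℂ) + ε * Complex.I + p k) (fun k => - p k))
      q.totalDegree (natDegree_lineP _ _ _) 0 h r hh (by
        intro t ht
        rw [eval_lineP]
        apply hq
        intro k
        have := hrad t (by simpa using ht) k
        have e : (z k : ℂ) + ε * Complex.I + p k + t * -p k =
          (z k : ℂ) + ε * Complex.I + (1 - t) * p k := by ring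
        rw [e]
        simp only [Complex.add_im, Complex.ofReal_im, Complex.mul_I_im, Complex.ofReal_re]
        linarith)
    rw [eval_lineP, eval_lineP] at this
    convert this using 4
    · ext k; ring
    · congr 2
      ext k; ring
  have hzero : ∀ h : ℂ, ‖h‖ ≤ r →
      MvPolynomial.aeval (fun k => (z k : ℂ) + (1 - h) * p k) q = 0 := by
    intro h hh
    have hc1 : Continuous (fun ε : ℝ =>
        ‖MvPolynomial.aeval (fun k => (z k : ℂ) + ε * Complex.I + (1 - h) * p k) q‖) := by
      refine ((continuous_aeval q).comp (f := fun ε : ℝ => fun k => (z k : ℂ) + ε * Complex.I + (1 - h) * p k) ?_).norm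
      fun_prop
    have hc2 : Continuous (fun ε : ℝ => 2^q.totalDegree *
        ‖MvPolynomial.aeval (fun k => (z k : ℂ) + ε * Complex.I + p k) q‖) := by
      refine continuous_const.mul ((continuous_aeval q).comp (f := fun ε : ℝ => fun k => (z k : ℂ) + ε * Complex.I + p k) ?_).norm
      fun_prop
    have := le_of_tendsto_of_tendsto
      ((hc1.tendsto 0).mono_left (nhdsWithin_le_nhds (s := Set.Ioi 0)))
      ((hc2.tendsto 0).mono_left (nhdsWithin_le_nhds (s := Set.Ioi 0)))
      (by filter_upwards [self_mem_nhdsWithin] with ε hε using hbound h hh ε hε)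
    simp only [Complex.ofReal_zero, zero_mul, add_zero, h0, norm_zero, mul_zero] at this
    exact norm_le_zero_iff.1 this
  have hpoly : lineP q (fun k => (z k : ℂ) + p k) (fun k => - p k) = 0 := by
    apply Polynomial.eq_zero_of_infinite_isRoot
    refine Set.Infinite.mono (s := Metric.ball (0:ℂ) r) ?_ ?_
    · intro t ht
      rw [Set.mem_ofPred_eq, IsRoot.def, eval_lineP, ← hzero t (by simpa using (Metric.mem_ball.1 ht).le)]
      congr 2
      ext k; ring
    · exact infinite_of_mem_nhds 0 (Metric.ball_mem_nhds 0 hr)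
  have := eval_lineP q (fun k => (z k : ℂ) + p k) (fun k => - p k) 1
  rw [hpoly] at this
  simp only [eval_zero, one_mul, add_neg_cancel_right, aeval_real] at this
  exact hz (by exact_mod_cast this.symm)

lemma logderiv_im (p : ℂ[X]) (h0 : p.eval 0 ≠ 0) (h : ∀ y : ℂ, 0 < y.im → p.eval y ≠ 0) :
    ((derivative p).eval 0 * (starRingEnd ℂ) (p.eval 0)).im ≤ 0 := by
  have e := (IsAlgClosed.splits p).eval_derivative_div_eval_of_ne_zero h0
  have hs : ((derivative p).eval 0 / p.eval 0).im ≤ 0 := by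
    rw [e]
    have hr : ∀ z ∈ p.roots, z.im ≤ 0 := by
      intro z hz
      by_contra hh
      exact h z (not_le.1 hh) (isRoot_of_mem_roots hz)
    generalize p.roots = m at hr
    induction m using Multiset.induction_on with
    | empty => simp
    | cons a m ih =>
      have h1 := ih (fun z hz => hr z (Multiset.mem_cons_of_mem hz))
      have h2 := hr a (Multiset.mem_cons_self a m)
      simp only [Multiset.map_cons, Multiset.sum_cons, Complex.add_im]
      have : (1 / (0 - a)).im ≤ 0 := by
        simp [Complex.inv_im]
        exact div_nonneg (by linarith) (Complex.normSq_nonneg _)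
      linarith
  have e2 : (derivative p).eval 0 * (starRingEnd ℂ) (p.eval 0) =
      ((derivative p).eval 0 / p.eval 0) * (Complex.normSq (p.eval 0) : ℂ) := by
    rw [← Complex.mul_conj]; field_simp
  rw [e2, Complex.im_mul_ofReal]
  exact mul_nonpos_of_nonpos_of_nonneg hs (Complex.normSq_nonneg _)

lemma line_taylor {n : ℕ} (q : MvPolynomial (Fin n) ℝ) (i : Fin n)
    (h4 : MvPolynomial.pderiv i (MvPolynomial.pderiv i (MvPolynomial.pderiv i
      (MvPolynomial.pderiv i q))) = 0) (z : Fin n → ℝ) (s : ℂ) :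
    MvPolynomial.aeval (fun k => (z k : ℂ) + s * (Pi.single i 1 : Fin n → ℂ) k) q =
      (MvPolynomial.eval z q : ℂ) + (MvPolynomial.eval z (MvPolynomial.pderiv i q) : ℂ) * s
      + (MvPolynomial.eval z (MvPolynomial.pderiv i (MvPolynomial.pderiv i q)) : ℂ) / 2 * s^2
      + (MvPolynomial.eval z (MvPolynomial.pderiv i (MvPolynomial.pderiv i
          (MvPolynomial.pderiv i q))) : ℂ) / 6 * s^3 := by
  have h := taylor_three (lineP q (fun k => (z k : ℂ)) (Pi.single i 1)) (by
    simp only [derivative_lineP, h4]; simp [lineP]) s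
  simp only [derivative_lineP, eval_lineP, zero_mul, add_zero, aeval_real] at h
  exact h

/-- Degree-3 barrier estimate: if `q` is real stable of degree at most 3 in `zᵢ`, `z` is
above the roots of `q` and `Φ_q^i(z) > 0`, then with `δ = 4/(3Φ_q^i(z))`, for every `j`:
`(q ∂_j∂_i²q - (∂_j q)(∂_i²q))(z) ≤ δ (q ∂_j∂_i³q - (∂_j q)(∂_i³q))(z)`. -/
theorem barrier_estimate_deg_three {n : ℕ} (q : MvPolynomial (Fin n) ℝ) (hq : RealStable q)
    (i : Fin n) (hdeg : MvPolynomial.degreeOf i q ≤ 3)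
    (z : Fin n → ℝ) (hz : AboveRoots q z) (hΦ : 0 < Phi q i z) :
    ∀ j : Fin n,
      MvPolynomial.eval z
          (q * MvPolynomial.pderiv j (MvPolynomial.pderiv i (MvPolynomial.pderiv i q))
            - MvPolynomial.pderiv j q * MvPolynomial.pderiv i (MvPolynomial.pderiv i q))
        ≤ (4 / (3 * Phi q i z)) *
          MvPolynomial.eval z
            (q * MvPolynomial.pderiv j
                (MvPolynomial.pderiv i (MvPolynomial.pderiv i (MvPolynomial.pderiv i q)))
              - MvPolynomial.pderiv j q *
                MvPolynomial.pderiv i (MvPolynomial.pderiv i (MvPolynomial.pderiv i q))) := by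
  intro j
  have h4 := pderiv_four q i hdeg
  have h4' : MvPolynomial.pderiv i (MvPolynomial.pderiv i (MvPolynomial.pderiv i
      (MvPolynomial.pderiv i (MvPolynomial.pderiv j q)))) = 0 := by
    simp only [pderiv_swap _ i j, h4, map_zero]
  have hz0 : MvPolynomial.eval z q ≠ 0 := by
    have := hz 0 (fun _ => le_rfl)
    simpa using this
  have tf := line_taylor q i h4 z
  have tg := line_taylor (MvPolynomial.pderiv j q) i h4' z
  have c2 : MvPolynomial.pderiv i (MvPolynomial.pderiv i (MvPolynomial.pderiv j q)) =
    MvPolynomial.pderiv j (MvPolynomial.pderiv i (MvPolynomial.pderiv i q)) := by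
    simp only [pderiv_swap _ i j]
  have c3 : MvPolynomial.pderiv i (MvPolynomial.pderiv i (MvPolynomial.pderiv i
      (MvPolynomial.pderiv j q))) = MvPolynomial.pderiv j (MvPolynomial.pderiv i
      (MvPolynomial.pderiv i (MvPolynomial.pderiv i q))) := by
    simp only [pderiv_swap _ i j]
  rw [c3, c2] at tg
  -- analytic facts on the line
  have F1 : ∀ s : ℂ, 0 < s.im →
      MvPolynomial.aeval (fun k => (z k : ℂ) + s * (Pi.single i 1 : Fin n → ℂ) k) q ≠ 0 := by
    intro s hs
    refine stable_boundary q hq z hz0 (fun k => s * (Pi.single i 1 : Fin n → ℂ) k) (fun k => ?_)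
    by_cases hk : k = i
    · subst hk; right; simpa using hs
    · left; simp [hk]
  have F2 : ∀ s : ℝ, 0 ≤ s →
      MvPolynomial.aeval (fun k => (z k : ℂ) + (s:ℂ) * (Pi.single i 1 : Fin n → ℂ) k) q ≠ 0 := by
    intro s hs
    have := hz (fun k => s * (Pi.single i 1 : Fin n → ℝ) k) (fun k => by
      by_cases hk : k = i
      · subst hk; simpa using hs
      · simp [hk])
    have e : (fun k => (z k : ℂ) + (s:ℂ) * (Pi.single i 1 : Fin n → ℂ) k) =
        fun k => (((z + fun k => s * (Pi.single i 1 : Fin n → ℝ) k) k : ℝ) : ℂ) := by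
      ext k
      by_cases hk : k = i
      · subst hk; simp
      · simp [hk]
    rw [e, aeval_real]
    exact_mod_cast this
  have F3 : ∀ s : ℂ, 0 < s.im →
      (MvPolynomial.aeval (fun k => (z k : ℂ) + s * (Pi.single i 1 : Fin n → ℂ) k)
          (MvPolynomial.pderiv j q) * (starRingEnd ℂ)
        (MvPolynomial.aeval (fun k => (z k : ℂ) + s * (Pi.single i 1 : Fin n → ℂ) k) q)).im ≤ 0 := by
    intro s hs
    have := logderiv_im
      (lineP q (fun k => (z k : ℂ) + s * (Pi.single i 1 : Fin n → ℂ) k) (Pi.single j 1))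
      (by rw [eval_lineP]; simpa using F1 s hs) (by
        intro y hy
        rw [eval_lineP]
        have := stable_boundary q hq z hz0 (fun k => s * (Pi.single i 1 : Fin n → ℂ) k
          + y * (Pi.single j 1 : Fin n → ℂ) k) (fun k => by
            by_cases hk : k = i
            · subst hk
              right
              by_cases hj : k = j
              · subst hj; simp; linarith
              · simp [hj]; linarith
            · by_cases hj : k = j
              · subst hj; right; simp [hk]; linarith
              · left; simp [hk, hj])
        simpa only [add_assoc] using this)
    simpa only [derivative_lineP, eval_lineP, zero_mul, add_zero] using this
  simp only [tf] at F1 F2 F3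
  simp only [tg] at F3
  clear tf tg c2 c3 h4 h4'
  simp only [map_sub, map_mul]
  unfold Phi at *
  generalize MvPolynomial.eval z q = f0 at *
  generalize MvPolynomial.eval z (MvPolynomial.pderiv i (MvPolynomial.pderiv j q)) = g1 at *
  generalize MvPolynomial.eval z (MvPolynomial.pderiv j (MvPolynomial.pderiv i
      (MvPolynomial.pderiv i (MvPolynomial.pderiv i q)))) = g3 at *
  generalize MvPolynomial.eval z (MvPolynomial.pderiv j (MvPolynomial.pderiv i
      (MvPolynomial.pderiv i q))) = g2 at *
  generalize MvPolynomial.eval z (MvPolynomial.pderiv i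
      (MvPolynomial.pderiv i (MvPolynomial.pderiv i q))) = f3 at *
  generalize MvPolynomial.eval z (MvPolynomial.pderiv i (MvPolynomial.pderiv i q)) = f2 at *
  generalize MvPolynomial.eval z (MvPolynomial.pderiv i q) = f1 at *
  generalize MvPolynomial.eval z (MvPolynomial.pderiv j q) = g0 at *
  have hf0 : (f0:ℂ) ≠ 0 := by exact_mod_cast hz0
  have main := core (f1/f0) (f2/2/f0) (f3/6/f0) ((g1*f0-g0*f1)/f0^2) ((g2*f0-g0*f2)/2/f0^2)
    ((g3*f0-g0*f3)/6/f0^2) hΦ ?_ ?_ ?_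
  · have hsq : 0 < f0^2 := by positivity
    set e := f1/f0 with he
    have e1 : f0 * g2 - g0 * f2 = 2 * f0^2 * ((g2*f0-g0*f2)/2/f0^2) := by field_simp
    have e2 : f0 * g3 - g0 * f3 = 6 * f0^2 * ((g3*f0-g0*f3)/6/f0^2) := by field_simp
    rw [e1, e2]
    generalize (g2*f0-g0*f2)/2/f0^2 = h2 at *
    generalize (g3*f0-g0*f3)/6/f0^2 = h3 at *
    rw [div_mul_eq_mul_div, le_div_iff₀ (by positivity)]
    nlinarith [mul_le_mul_of_nonneg_left main hsq.le]
  · intro u hu h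
    have hu0 : u ≠ 0 := by rintro rfl; simp at hu
    apply F1 (-u⁻¹) (by
      simp only [Complex.neg_im, Complex.inv_im]
      rw [neg_div, neg_neg]
      exact div_pos hu (Complex.normSq_pos.2 hu0))
    push_cast at h
    field_simp at h ⊢
    linear_combination h
  · intro a ha h
    have ha0 : (a:ℂ) ≠ 0 := by exact_mod_cast ha.ne
    apply F2 (-a⁻¹) (by
      have := inv_neg''.2 ha
      linarith)
    have h' := congrArg (fun x : ℝ => (x:ℂ)) h
    push_cast at h' ⊢
    field_simp at h' ⊢
    linear_combination h'
  · intro u hu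
    have hu0 : u ≠ 0 := by rintro rfl; simp at hu
    have h := F3 (-u⁻¹) (by
      simp only [Complex.neg_im, Complex.inv_im]
      rw [neg_div, neg_neg]
      exact div_pos hu (Complex.normSq_pos.2 hu0))
    set P : ℂ := u^3 - (f1/f0:ℝ) * u^2 + (f2/2/f0:ℝ) * u - (f3/6/f0:ℝ) with hPdef
    set N : ℂ := (((g1*f0-g0*f1)/f0^2 : ℝ) : ℂ) * u^2 - ((g2*f0-g0*f2)/2/f0^2:ℝ) * u
      + ((g3*f0-g0*f3)/6/f0^2:ℝ) with hNdef
    have eP : (f0:ℂ) + f1 * -u⁻¹ + f2/2 * (-u⁻¹)^2 + f3/6 * (-u⁻¹)^3 = f0 * P / u^3 := by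
      rw [hPdef]; push_cast; field_simp; ring
    have eN : (g0:ℂ) + g1 * -u⁻¹ + g2/2 * (-u⁻¹)^2 + g3/6 * (-u⁻¹)^3 =
        (g0 * P - f0 * N) / u^3 := by
      rw [hPdef, hNdef]; push_cast; field_simp; ring
    rw [eP, eN] at h
    have e : (g0 * P - f0 * N) / u^3 * (starRingEnd ℂ) (f0 * P / u^3) =
        ((f0 / Complex.normSq (u^3) : ℝ) : ℂ) *
          (((g0 * Complex.normSq P : ℝ) : ℂ) - f0 * (N * (starRingEnd ℂ) P)) := by
      have hc : (starRingEnd ℂ) u ≠ 0 := by simpa using hu0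
      push_cast
      rw [← Complex.mul_conj, ← Complex.mul_conj]
      simp only [map_div₀, map_mul, Complex.conj_ofReal, map_pow]
      field_simp
    rw [e, Complex.im_ofReal_mul, Complex.sub_im, Complex.ofReal_im, Complex.im_ofReal_mul] at h
    have hn : 0 < Complex.normSq (u^3) := Complex.normSq_pos.2 (pow_ne_zero 3 hu0)
    have hk : 0 < f0^2 / Complex.normSq (u^3) := by positivity
    refine nonneg_of_mul_nonneg_right (a := f0^2 / Complex.normSq (u^3)) ?_ hk
    have e' : f0 / Complex.normSq (u^3) * (0 - f0 * (N * (starRingEnd ℂ) P).im) =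
        -(f0^2 / Complex.normSq (u^3) * (N * (starRingEnd ℂ) P).im) := by ring
    rw [e'] at h
    linarith
end

section
/- Let A be an n×n complex Hermitian matrix, let p(z₁,…,z_n) = det(Z − A)² where Z = diag(z₁,…,z_n), and let z ∈ ℝ^n be such that Z − A (with Z = diag(z)) is invertible; set B := (Z − A)^{-1}. Then for every k ≥ 0 and every function f : {1,…,k} → {1,…,n}, (∂_{z_{f(1)}} ∂_{z_{f(2)}} ⋯ ∂_{z_{f(k)}} p)(z) = p(z) · det₂(M), where M is the k×k matrix with entries M_{s,t} = B_{f(s),f(t)}. -/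
open Polynomial Matrix

/-- The number of cycles of a permutation, counting fixed points as cycles. -/
def cycleCount {ι : Type*} [Fintype ι] [DecidableEq ι] (σ : Equiv.Perm ι) : ℕ :=
  σ.cycleType.card + (Fintype.card ι - σ.support.card)

/-- The `r`-determinant `det_r(M) = Σ_σ sgn(σ) r^{c(σ)} Π_i M_{i σ(i)}`. -/
noncomputable def detr {ι : Type*} [Fintype ι] [DecidableEq ι] {R : Type*} [CommRing R]
    (r : ℕ) (M : Matrix ι ι R) : R :=
  ∑ σ : Equiv.Perm ι, ((Equiv.Perm.sign σ : ℤ) : R) * (r : R) ^ cycleCount σ * ∏ i, M i (σ i)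

/-- The formal partial derivative `∂/∂zᵢ` as a linear endomorphism of `ℂ[z₁,…,z_n]`. -/
noncomputable def pd {n : ℕ} (i : Fin n) :
    MvPolynomial (Fin n) ℂ →ₗ[ℂ] MvPolynomial (Fin n) ℂ :=
  (MvPolynomial.pderiv i).toLinearMap

/-- The matrix `Z - A`, where `Z = diag(z₁,…,z_n)` is the diagonal matrix of indeterminates. -/
noncomputable def ZsubA {n : ℕ} (A : Matrix (Fin n) (Fin n) ℂ) :
    Matrix (Fin n) (Fin n) (MvPolynomial (Fin n) ℂ) :=
  Matrix.of fun i j => (if i = j then MvPolynomial.X i else 0) - MvPolynomial.C (A i j)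

theorem cycleCount_swap_mul {ι : Type*} [Fintype ι] [DecidableEq ι] (σ : Equiv.Perm ι) (x : ι)
    (hx : σ x ≠ x) : cycleCount (Equiv.swap x (σ x) * σ) = cycleCount σ + 1 := by
  classical
  set c := σ.cycleOf x with hc
  set g := σ * c⁻¹ with hg
  have hcyc : c.IsCycle := Equiv.Perm.isCycle_cycleOf σ hx
  have hmem : c ∈ σ.cycleFactorsFinset :=
    Equiv.Perm.cycleOf_mem_cycleFactorsFinset_iff.mpr (Equiv.Perm.mem_support.mpr hx)
  have hd : Equiv.Perm.Disjoint c g :=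
    (Equiv.Perm.disjoint_mul_inv_of_mem_cycleFactorsFinset hmem).symm
  have hσ : σ = c * g := by
    rw [hd.commute.eq, hg]; simp
  have hcx : c x = σ x := Equiv.Perm.cycleOf_apply_self σ x
  have hcx' : c x ≠ x := by rw [hcx]; exact hx
  have hT : σ.cycleType = {c.support.card} + g.cycleType := by
    rw [hσ, hd.cycleType_mul, hcyc.cycleType]
  have hS : σ.support.card = c.support.card + g.support.card := by
    rw [hσ, hd.card_support_mul]
  have hle : σ.support.card ≤ Fintype.card ι := Finset.card_le_univ _
  have h2 := hcyc.two_le_card_support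
  by_cases hcc : c (c x) = x
  · have h := hcyc.eq_swap_of_apply_apply_eq_self hcx' hcc
    have h1 : Equiv.swap x (σ x) * σ = g := by
      rw [← hcx, ← h]
      have : c * c = 1 := by rw [h]; simp
      calc c * σ = c * (c * g) := by rw [← hσ]
        _ = (c * c) * g := by rw [mul_assoc]
        _ = g := by rw [this, one_mul]
    have h3 : c.support.card = 2 := by
      rw [h]; exact Equiv.Perm.card_support_swap (Ne.symm hcx')
    rw [h1]
    unfold cycleCount
    rw [hT, hS]
    simp only [Multiset.card_add, Multiset.card_singleton]
    omega
  · have hcyc' := hcyc.swap_mul hcx' hcc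
    have hs := Equiv.Perm.support_swap_mul_eq c x hcc
    set c' := Equiv.swap x (c x) * c with hc'
    have h1 : Equiv.swap x (σ x) * σ = c' * g := by
      rw [hc', mul_assoc, ← hσ, hcx]
    have hd' : Equiv.Perm.Disjoint c' g := by
      rw [Equiv.Perm.disjoint_iff_disjoint_support] at hd ⊢
      rw [hs]
      exact Finset.disjoint_of_subset_left Finset.sdiff_subset hd
    have hcard : c'.support.card = c.support.card - 1 := by
      rw [hs, Finset.card_sdiff_of_subset]
      · simp
      · simpa using hcx'
    rw [h1]
    unfold cycleCount
    rw [hT, hS, hd'.cycleType_mul, hd'.card_support_mul, hcyc'.cycleType]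
    simp only [Multiset.card_add, Multiset.card_singleton]
    omega

theorem cycleCount_decomposeFin_zero {k : ℕ} (e : Equiv.Perm (Fin k)) :
    cycleCount (Equiv.Perm.decomposeFin.symm (0, e)) = cycleCount e + 1 := by
  classical
  have h : Equiv.Perm.decomposeFin.symm (0, e) =
      e.extendDomain (Equiv.ofInjective (Fin.succ : Fin k → Fin (k+1)) (Fin.succ_injective k)) := by
    ext i
    refine Fin.cases ?_ (fun j => ?_) i
    · rw [Equiv.Perm.decomposeFin_symm_apply_zero, Equiv.Perm.extendDomain_apply_not_subtype]
      rintro ⟨y, hy⟩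
      exact Fin.succ_ne_zero y hy
    · rw [Equiv.Perm.decomposeFin_symm_apply_succ]
      have := Equiv.Perm.extendDomain_apply_image e
        (Equiv.ofInjective (Fin.succ : Fin k → Fin (k+1)) (Fin.succ_injective k)) j
      simp only [Equiv.ofInjective_apply] at this
      rw [this]
      simp
  have hle : e.support.card ≤ Fintype.card (Fin k) := Finset.card_le_univ _
  unfold cycleCount
  rw [h, Equiv.Perm.cycleType_extendDomain, Equiv.Perm.card_support_extend_domain]
  simp only [Fintype.card_fin] at *
  omega

theorem cycleCount_decomposeFin_succ {k : ℕ} (a : Fin k) (e : Equiv.Perm (Fin k)) :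
    cycleCount (Equiv.Perm.decomposeFin.symm (a.succ, e)) = cycleCount e := by
  have h := cycleCount_swap_mul (Equiv.Perm.decomposeFin.symm (a.succ, e)) 0 (by
    simp)
  have h2 : Equiv.swap 0 (Equiv.Perm.decomposeFin.symm (a.succ, e) 0) *
      Equiv.Perm.decomposeFin.symm (a.succ, e) = Equiv.Perm.decomposeFin.symm (0, e) := by
    ext i
    refine Fin.cases ?_ (fun j => ?_) i
    · simp
    · simp
  rw [h2, cycleCount_decomposeFin_zero] at h
  omega

theorem detr_succ {R : Type*} [CommRing R] (r : ℕ) {k : ℕ} (N : Matrix (Fin (k+1)) (Fin (k+1)) R) :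
    detr r N = ∑ e : Equiv.Perm (Fin k), ((Equiv.Perm.sign e : ℤ) : R) * (r : R) ^ cycleCount e *
      (r * N 0 0 * ∏ j : Fin k, N j.succ (e j).succ -
        ∑ j : Fin k, (∏ l ∈ Finset.univ.erase j, N l.succ (e l).succ) *
          (N j.succ 0 * N 0 (e j).succ)) := by
  unfold detr
  rw [← Equiv.sum_comp (Equiv.Perm.decomposeFin.symm : _ ≃ Equiv.Perm (Fin (k+1))),
    Fintype.sum_prod_type, Fin.sum_univ_succ]
  simp only [mul_sub, Finset.sum_sub_distrib]
  rw [sub_eq_add_neg]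
  congr 1
  · refine Finset.sum_congr rfl fun e _ => ?_
    rw [cycleCount_decomposeFin_zero, Equiv.Perm.decomposeFin.symm_sign, Fin.prod_univ_succ]
    simp
    ring
  · rw [Finset.sum_comm, ← Finset.sum_neg_distrib]
    refine Finset.sum_congr rfl fun e _ => ?_
    rw [← Equiv.sum_comp e, Finset.mul_sum, ← Finset.sum_neg_distrib]
    refine Finset.sum_congr rfl fun j _ => ?_
    rw [cycleCount_decomposeFin_succ, Equiv.Perm.decomposeFin.symm_sign, Fin.prod_univ_succ,
      ← Finset.mul_prod_erase _ _ (Finset.mem_univ j)]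
    have : ∏ l ∈ Finset.univ.erase j, N l.succ
        (Equiv.Perm.decomposeFin.symm ((e j).succ, e) l.succ) =
        ∏ l ∈ Finset.univ.erase j, N l.succ (e l).succ := by
      refine Finset.prod_congr rfl fun l hl => ?_
      rw [Equiv.Perm.decomposeFin_symm_apply_succ, Equiv.swap_apply_of_ne_of_ne]
      · exact Fin.succ_ne_zero _
      · intro h
        exact (Finset.mem_erase.mp hl).1 (e.injective (Fin.succ_injective _ h))
    rw [this]
    simp
    ring

theorem deriv_prod {R : Type*} [CommRing R] [Algebra ℂ R] (D : Derivation ℂ R R)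
    {ι : Type*} [DecidableEq ι] (s : Finset ι) (g : ι → R) :
    D (∏ i ∈ s, g i) = ∑ i ∈ s, (∏ j ∈ s.erase i, g j) * D (g i) := by
  induction s using Finset.induction_on with
  | empty => simp
  | insert a s ha ih =>
    rw [Finset.prod_insert ha, Derivation.leibniz, ih, Finset.sum_insert ha,
      Finset.erase_insert ha, smul_eq_mul, smul_eq_mul, Finset.mul_sum, add_comm]
    congr 1
    refine Finset.sum_congr rfl fun i hi => ?_
    have hia : a ≠ i := fun h => ha (h ▸ hi)
    rw [Finset.erase_insert_of_ne hia, Finset.prod_insert (by simp [ha]), mul_assoc]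

theorem deriv_det_zero {R : Type*} [CommRing R] [Algebra ℂ R] (D : Derivation ℂ R R)
    {n : ℕ} (M : Matrix (Fin n) (Fin n) R) (h : ∀ i j, D (M i j) = 0) : D M.det = 0 := by
  rw [Matrix.det_apply, map_sum]
  refine Finset.sum_eq_zero fun σ _ => ?_
  rw [Units.smul_def, map_zsmul, deriv_prod]
  simp [h]

theorem pderiv_ZsubA {n : ℕ} (A : Matrix (Fin n) (Fin n) ℂ) (i a b : Fin n) :
    MvPolynomial.pderiv i (ZsubA A a b) = if a = i ∧ b = i then 1 else 0 := by
  unfold ZsubA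
  rw [Matrix.of_apply, map_sub, MvPolynomial.pderiv_C, sub_zero]
  by_cases hab : a = b
  · subst hab
    simp [MvPolynomial.pderiv_X, Pi.single_apply, eq_comm]
  · rw [if_neg hab, map_zero, if_neg]
    rintro ⟨rfl, rfl⟩
    exact hab rfl

theorem pderiv_det {n : ℕ} (A : Matrix (Fin n) (Fin n) ℂ) (i : Fin n) :
    MvPolynomial.pderiv i (ZsubA A).det = (ZsubA A).adjugate i i := by
  have hz : ∀ j, MvPolynomial.pderiv i ((ZsubA A).adjugate j i) = 0 := by
    intro j
    rw [Matrix.adjugate_apply]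
    refine deriv_det_zero _ _ fun a b => ?_
    by_cases ha : a = i
    · subst ha
      rw [Matrix.updateRow_self, Pi.single_apply]
      split_ifs <;> simp
    · rw [Matrix.updateRow_ne ha, pderiv_ZsubA, if_neg (fun h => ha h.1)]
  rw [Matrix.det_eq_sum_mul_adjugate_row _ i, map_sum]
  simp [Derivation.leibniz, hz, pderiv_ZsubA]

theorem pderiv_adjugate {n : ℕ} (A : Matrix (Fin n) (Fin n) ℂ) (i a b : Fin n) :
    (ZsubA A).det * MvPolynomial.pderiv i ((ZsubA A).adjugate a b) =
      (ZsubA A).adjugate i i * (ZsubA A).adjugate a b -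
        (ZsubA A).adjugate a i * (ZsubA A).adjugate i b := by
  set M := ZsubA A with hM
  set Q := M.adjugate with hQ
  have h1 : ∀ c, ∑ l, MvPolynomial.pderiv i (Q a l) * M l c +
      (if c = i then Q a i else 0) = if a = c then Q i i else 0 := by
    intro c
    have h := congrArg (MvPolynomial.pderiv i) (congrFun (congrFun (Matrix.adjugate_mul M) a) c)
    rw [Matrix.mul_apply, map_sum] at h
    simp only [Derivation.leibniz, smul_eq_mul, hM, pderiv_ZsubA, Finset.sum_add_distrib,
      Matrix.smul_apply, Matrix.one_apply] at h
    rw [← hM, ← hQ] at h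
    have e1 : ∑ x, (Q a x * if x = i ∧ c = i then (1 : MvPolynomial (Fin n) ℂ) else 0) =
      if c = i then Q a i else 0 := by
      by_cases hc : c = i <;> simp [hc]
    have e2 : M.det * MvPolynomial.pderiv i (if a = c then (1 : MvPolynomial (Fin n) ℂ) else 0) +
        (if a = c then 1 else 0) * MvPolynomial.pderiv i M.det =
        if a = c then Q i i else 0 := by
      by_cases hc : a = c
      · simp [hc, hM, pderiv_det, hQ]
      · simp [hc]
    rw [e1, e2] at h
    rw [← h, add_comm]
    congr 1
    exact Finset.sum_congr rfl fun l _ => mul_comm _ _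
  have h2 : ∑ c, (∑ l, MvPolynomial.pderiv i (Q a l) * M l c +
      (if c = i then Q a i else 0)) * Q c b = ∑ c, (if a = c then Q i i else 0) * Q c b :=
    Finset.sum_congr rfl fun c _ => by rw [h1 c]
  simp only [add_mul, Finset.sum_add_distrib, ite_mul, zero_mul, Finset.sum_ite_eq,
    Finset.sum_ite_eq', Finset.mem_univ, if_true, Finset.sum_mul] at h2
  rw [Finset.sum_comm] at h2
  simp only [mul_assoc, ← Finset.mul_sum] at h2
  have h3 : ∀ l, ∑ c, M l c * Q c b = if l = b then M.det else 0 := by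
    intro l
    rw [← Matrix.mul_apply, hQ, Matrix.mul_adjugate, Matrix.smul_apply, Matrix.one_apply]
    simp
  simp only [h3] at h2
  simp only [mul_ite, mul_zero, Finset.sum_ite_eq', Finset.mem_univ, if_true] at h2
  rw [← h2]
  ring

theorem poly_identity {n : ℕ} (A : Matrix (Fin n) (Fin n) ℂ) (k : ℕ) (f : Fin k → Fin n) :
    (ZsubA A).det ^ k * ((List.ofFn (fun s : Fin k => pd (f s))).prod) ((ZsubA A).det ^ 2) =
      (ZsubA A).det ^ 2 *
        detr 2 (Matrix.of fun s t : Fin k => (ZsubA A).adjugate (f s) (f t)) := by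
  induction k with
  | zero => simp [detr, cycleCount]
  | succ k ih =>
    have h := ih (fun s => f s.succ)
    rw [List.ofFn_succ, List.prod_cons, Module.End.mul_apply]
    set P := ((List.ofFn (fun s : Fin k => pd (f s.succ))).prod) ((ZsubA A).det ^ 2) with hP
    set q := (ZsubA A).det with hq
    set Q := (ZsubA A).adjugate with hQ
    set R := detr 2 (Matrix.of fun s t : Fin k => Q (f s.succ) (f t.succ)) with hR
    set i := f 0 with hi
    have hpd : pd i P = MvPolynomial.pderiv i P := rfl
    have hDq : MvPolynomial.pderiv i q = Q i i := pderiv_det A i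
    have hDQ : ∀ a b, q * MvPolynomial.pderiv i (Q a b) = Q i i * Q a b - Q a i * Q i b :=
      pderiv_adjugate A i
    have hD := congrArg (fun p => q * MvPolynomial.pderiv i p) h
    simp only [Derivation.leibniz, Derivation.leibniz_pow, smul_eq_mul, hDq, nsmul_eq_mul] at hD
    have hk : q * ((k : MvPolynomial (Fin n) ℂ) * (q ^ (k - 1) * Q i i)) = k * q ^ k * Q i i := by
      cases k with
      | zero => simp
      | succ m => rw [Nat.add_sub_cancel, pow_succ]; ring
    have hDR : q * MvPolynomial.pderiv i R + 2 * Q i i * R = k * Q i i * R +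
        detr 2 (Matrix.of fun s t : Fin (k+1) => Q (f s) (f t)) := by
      rw [detr_succ, hR]
      unfold detr
      rw [map_sum, Finset.mul_sum, Finset.mul_sum, Finset.mul_sum, ← Finset.sum_add_distrib,
        ← Finset.sum_add_distrib]
      refine Finset.sum_congr rfl fun e _ => ?_
      simp only [Matrix.of_apply, ← hi]
      set c : MvPolynomial (Fin n) ℂ := ((Equiv.Perm.sign e : ℤ) : MvPolynomial (Fin n) ℂ) *
        ((2 : ℕ) : MvPolynomial (Fin n) ℂ) ^ cycleCount e with hc
      have hDc : MvPolynomial.pderiv i c = 0 := by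
        have : c = MvPolynomial.C (((Equiv.Perm.sign e : ℤ) : ℂ) * ((2 : ℕ) : ℂ) ^ cycleCount e) := by
          rw [map_mul, map_pow, map_natCast, map_intCast]
        rw [this, MvPolynomial.pderiv_C]
      rw [Derivation.leibniz, hDc, smul_zero, add_zero, smul_eq_mul, deriv_prod]
      have hs : q * ∑ j : Fin k, (∏ l ∈ Finset.univ.erase j, Q (f l.succ) (f (e l).succ)) *
            MvPolynomial.pderiv i (Q (f j.succ) (f (e j).succ)) =
          k * Q i i * ∏ l, Q (f l.succ) (f (e l).succ) -
          ∑ j : Fin k, (∏ l ∈ Finset.univ.erase j, Q (f l.succ) (f (e l).succ)) *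
            (Q (f j.succ) i * Q i (f (e j).succ)) := by
        have : (k : MvPolynomial (Fin n) ℂ) * Q i i * ∏ l, Q (f l.succ) (f (e l).succ) =
            ∑ j : Fin k, Q i i * ∏ l, Q (f l.succ) (f (e l).succ) := by
          simp [mul_assoc]
        rw [this, Finset.mul_sum, ← Finset.sum_sub_distrib]
        refine Finset.sum_congr rfl fun j _ => ?_
        rw [← Finset.mul_prod_erase _ _ (Finset.mem_univ j)]
        linear_combination (∏ l ∈ Finset.univ.erase j, Q (f l.succ) (f (e l).succ)) *
          hDQ (f j.succ) (f (e j).succ)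
      push_cast
      linear_combination c * hs
    rw [hpd]
    have h' : q ^ k * P = q ^ 2 * R := h
    push_cast at hD
    linear_combination hD - P * hk + q ^ 2 * hDR - k * Q i i * h'

theorem detr_smul {R : Type*} [CommRing R] (r k : ℕ) (c : R) (N : Matrix (Fin k) (Fin k) R) :
    detr r (Matrix.of fun s t => c * N s t) = c ^ k * detr r N := by
  unfold detr
  rw [Finset.mul_sum]
  refine Finset.sum_congr rfl fun e _ => ?_
  simp only [Matrix.of_apply, Finset.prod_mul_distrib, Finset.prod_const, Finset.card_univ,
    Fintype.card_fin]
  ring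

theorem map_detr {R S : Type*} [CommRing R] [CommRing S] (φ : R →+* S) (r k : ℕ)
    (N : Matrix (Fin k) (Fin k) R) :
    φ (detr r N) = detr r (Matrix.of fun s t => φ (N s t)) := by
  unfold detr
  simp

/-- For Hermitian `A`, `p = det(Z-A)²` and a real point `z` at which `Z - A` is invertible
with inverse `B`: any mixed partial derivative `∂_{z_{f(1)}} ⋯ ∂_{z_{f(k)}} p` evaluated at
`z` equals `p(z) det₂(M)`, where `M_{s,t} = B_{f(s), f(t)}`. -/
theorem mixed_partial_eq_det2 {n : ℕ} (A : Matrix (Fin n) (Fin n) ℂ) (hA : A.IsHermitian)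
    (z : Fin n → ℝ)
    (hinv : IsUnit (Matrix.diagonal (fun i => (z i : ℂ)) - A).det)
    (k : ℕ) (f : Fin k → Fin n) :
    MvPolynomial.eval (fun i => ((z i : ℝ) : ℂ))
        (((List.ofFn (fun s : Fin k => pd (f s))).prod) ((ZsubA A).det ^ 2))
      = MvPolynomial.eval (fun i => ((z i : ℝ) : ℂ)) ((ZsubA A).det ^ 2) *
        detr 2 (Matrix.of fun s t : Fin k =>
          ((Matrix.diagonal (fun i => (z i : ℂ)) - A)⁻¹) (f s) (f t)) := by
  set v : Fin n → ℂ := fun i => ((z i : ℝ) : ℂ) with hv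
  set Z := Matrix.diagonal v - A with hZ
  have hmap : (MvPolynomial.eval v).mapMatrix (ZsubA A) = Z := by
    ext a b
    by_cases hab : a = b
    · subst hab; simp [ZsubA, hZ]
    · simp [ZsubA, hZ, hab]
  have hdet : MvPolynomial.eval v (ZsubA A).det = Z.det := by
    rw [RingHom.map_det, hmap]
  have hadj : ∀ a b, MvPolynomial.eval v ((ZsubA A).adjugate a b) = Z.det * Z⁻¹ a b := by
    intro a b
    have h1 : (MvPolynomial.eval v).mapMatrix (ZsubA A).adjugate = Z.adjugate := by
      rw [RingHom.map_adjugate, hmap]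
    have h2 := congrFun (congrFun h1 a) b
    rw [RingHom.mapMatrix_apply, Matrix.map_apply] at h2
    rw [h2, Matrix.inv_def, Matrix.smul_apply, smul_eq_mul, ← mul_assoc,
      Ring.mul_inverse_cancel _ hinv, one_mul]
  have h := congrArg (MvPolynomial.eval v) (poly_identity A k f)
  rw [map_mul, map_mul, map_detr, map_pow, hdet] at h
  simp only [Matrix.of_apply, hadj] at h
  have h3 := detr_smul 2 k Z.det (Matrix.of fun s t : Fin k => Z⁻¹ (f s) (f t))
  simp only [Matrix.of_apply] at h3
  rw [h3] at h
  refine (IsUnit.mul_right_inj (hinv.pow k)).mp ?_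
  rw [h]
  ring
end
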